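/- Let G be a finite group of order n > 1, let q be the smallest prime divisor of n and p the largest prime divisor of n. If q·ψ(G) ≥ ψ(C_n), then G is solvable and every Sylow p-subgroup of G contains a cyclic subgroup of index p. -/

import Mathlib

/-- `psi G` is the sum of the orders of all elements of the finite group `G`. -/
noncomputable def psi (G : Type*) [Group G] [Fintype G] : ℕ := ∑ x : G, orderOf x

/-- `psiC n` is the sum of the orders of all elements of the cyclic group `C_n`. -/
noncomputable def psiC (n : ℕ) : ℕ := ∑ k ∈ Finset.range n, addOrderOf (k : ZMod n)

theorem psi_eq_sum_divisors (G : Type*) [Group G] [Fintype G] [IsCyclic G] :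
    psi G = ∑ d ∈ (Fintype.card G).divisors, d.totient * d := by
  classical
  rw [psi, ← Finset.sum_fiberwise_of_maps_to (s := Finset.univ) (g := fun x : G => orderOf x)
    (t := (Fintype.card G).divisors)
    (fun x _ => Nat.mem_divisors.2 ⟨orderOf_dvd_card, Fintype.card_ne_zero⟩)]
  refine Finset.sum_congr rfl fun d hd => ?_
  rw [← IsCyclic.card_orderOf_eq_totient (α := G) (Nat.dvd_of_mem_divisors hd), ← smul_eq_mul,
    ← Finset.sum_const]
  exact Finset.sum_congr rfl fun x hx => (Finset.mem_filter.1 hx).2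

theorem psiC_eq_sum_divisors {n : ℕ} (hn : n ≠ 0) :
    psiC n = ∑ d ∈ n.divisors, d.totient * d := by
  have : NeZero n := ⟨hn⟩
  have h := psi_eq_sum_divisors (Multiplicative (ZMod n))
  rw [Fintype.card_multiplicative, ZMod.card] at h
  rw [← h, psiC, psi]
  refine Finset.sum_bij' (fun k _ => Multiplicative.ofAdd (k : ZMod n))
    (fun x _ => (Multiplicative.toAdd x).val) ?_ ?_ ?_ ?_ ?_
  · simp
  · intro x _
    exact Finset.mem_range.2 (ZMod.val_lt _)
  · intro k hk
    exact ZMod.val_cast_of_lt (Finset.mem_range.1 hk)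
  · intro x _
    exact congrArg Multiplicative.ofAdd (ZMod.natCast_zmod_val (Multiplicative.toAdd x))
  · simp

theorem psi_eq_psiC (G : Type*) [Group G] [Fintype G] [IsCyclic G] :
    psi G = psiC (Fintype.card G) := by
  rw [psi_eq_sum_divisors, psiC_eq_sum_divisors Fintype.card_ne_zero]

theorem psiC_mul_of_coprime {m n : ℕ} (hm : m ≠ 0) (hn : n ≠ 0) (h : m.Coprime n) :
    psiC (m * n) = psiC m * psiC n := by
  let f : ArithmeticFunction ℕ := ⟨fun d => d.totient * d, by simp⟩
  have hf : f.IsMultiplicative := ⟨by simp [f], fun {a b} hab => by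
    simp only [f, ArithmeticFunction.coe_mk, Nat.totient_mul hab]
    ring⟩
  have key := (ArithmeticFunction.isMultiplicative_zeta.mul hf).map_mul_of_coprime h
  have hsum (k : ℕ) : (ArithmeticFunction.zeta * f) k = ∑ d ∈ k.divisors, d.totient * d := by
    have := ArithmeticFunction.coe_zeta_mul_apply (f := f) (x := k)
    rw [ArithmeticFunction.natCoe_nat] at this
    exact this
  rw [psiC_eq_sum_divisors (mul_ne_zero hm hn), psiC_eq_sum_divisors hm, psiC_eq_sum_divisors hn,
    ← hsum, ← hsum, ← hsum, key]

theorem psiC_prime_pow_mul {p : ℕ} (hp : p.Prime) (a : ℕ) :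
    psiC (p ^ a) * (p + 1) = (p ^ a) ^ 2 * p + 1 := by
  rw [psiC_eq_sum_divisors (pow_ne_zero _ hp.ne_zero), Nat.sum_divisors_prime_pow hp]
  induction a with
  | zero => simp
  | succ a ih =>
    rw [Finset.sum_range_succ, add_mul, ih, Nat.totient_prime_pow_succ hp]
    obtain ⟨k, rfl⟩ := Nat.exists_eq_add_of_le hp.one_le
    rw [Nat.add_sub_cancel_left]
    ring

/-- If all prime divisors of `n > 1` are at most `p`, then `ψ(C_n) > q n² / (p + 1)`,
where `q` is the smallest prime divisor of `n`. -/
theorem sq_mul_minFac_lt_psiC_mul (p : ℕ) : ∀ n : ℕ, 1 < n →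
    (∀ r : ℕ, r.Prime → r ∣ n → r ≤ p) → n ^ 2 * n.minFac < psiC n * (p + 1) := by
  induction p with
  | zero =>
    intro n hn h
    have hq := Nat.minFac_prime hn.ne'
    exact absurd (h _ hq n.minFac_dvd) (by simpa using hq.ne_zero)
  | succ p ih =>
    intro n hn h
    by_cases hpn : (p + 1).Prime ∧ p + 1 ∣ n
    · obtain ⟨hp, hdvd⟩ := hpn
      obtain ⟨a, m, hm, rfl⟩ := Nat.exists_eq_pow_mul_and_not_dvd (by omega : n ≠ 0) _ hp.ne_one
      have hm0 : m ≠ 0 := by rintro rfl; simp at hm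
      rw [psiC_mul_of_coprime (pow_ne_zero _ hp.ne_zero) hm0
        (Nat.Coprime.pow_left _ (hp.coprime_iff_not_dvd.2 hm))]
      have hpow := psiC_prime_pow_mul hp a
      have hbound : (((p + 1) ^ a) * m).minFac * m ^ 2 ≤ psiC m * (p + 1) := by
        rcases (Nat.one_le_iff_ne_zero.2 hm0).eq_or_lt with rfl | hm1
        · have h1 : psiC 1 = 1 := by simp [psiC_eq_sum_divisors]
          rw [h1, one_pow, mul_one, one_mul]
          exact Nat.minFac_le_of_dvd hp.two_le hdvd
        · have hlt := ih m hm1 fun r hr hrm => by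
            have h2 := h r hr (hrm.mul_left _)
            rcases h2.eq_or_lt with rfl | h3
            · exact absurd hrm hm
            · omega
          have hle : (((p + 1) ^ a) * m).minFac ≤ m.minFac :=
            Nat.minFac_le_of_dvd (Nat.minFac_prime hm1.ne').two_le
              (m.minFac_dvd.mul_left _)
          calc (((p + 1) ^ a) * m).minFac * m ^ 2 ≤ m.minFac * m ^ 2 := by gcongr
            _ ≤ psiC m * (p + 1) := by rw [mul_comm]; exact hlt.le
      have hpos : 0 < m ^ 2 * (((p + 1) ^ a) * m).minFac :=
        Nat.mul_pos (by positivity) (Nat.minFac_pos _)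
      refine lt_of_mul_lt_mul_right (a := p + 1) ?_ (Nat.zero_le _)
      calc _ = ((p + 1) ^ a) ^ 2 * (p + 1) * (((p + 1) ^ a * m).minFac * m ^ 2) := by ring
        _ < (((p + 1) ^ a) ^ 2 * (p + 1) + 1) * (((p + 1) ^ a * m).minFac * m ^ 2) := by
          rw [add_one_mul]; rw [mul_comm] at hpos; omega
        _ ≤ (((p + 1) ^ a) ^ 2 * (p + 1) + 1) * (psiC m * (p + 1)) := by gcongr
        _ = _ := by rw [← hpow]; ring
    · have := ih n hn fun r hr hrn => by
        have h2 := h r hr hrn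
        rcases h2.eq_or_lt with rfl | h3
        · exact absurd ⟨hr, hrn⟩ hpn
        · omega
      exact this.trans_le (by gcongr; omega)

theorem exists_index_zpowers_le {G : Type*} [Group G] [Fintype G] {p : ℕ}
    (h1 : 1 < Fintype.card G) (hp : ∀ r : ℕ, r.Prime → r ∣ Fintype.card G → r ≤ p)
    (hpsi : psiC (Fintype.card G) ≤ (Fintype.card G).minFac * psi G) :
    ∃ x : G, (Subgroup.zpowers x).index ≤ p := by
  by_contra! hlt
  have hle : psi G * (p + 1) ≤ Fintype.card G ^ 2 := by
    rw [psi, Finset.sum_mul, sq, ← smul_eq_mul, ← Finset.card_univ]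
    refine Finset.sum_le_card_nsmul _ _ _ fun x _ => ?_
    rw [Finset.card_univ, ← Nat.card_eq_fintype_card, ← (Subgroup.zpowers x).card_mul_index,
      Nat.card_zpowers]
    exact Nat.mul_le_mul_left _ (hlt x)
  have := sq_mul_minFac_lt_psiC_mul p _ h1 hp
  have h2 := Nat.mul_le_mul_right (p + 1) hpsi
  have h3 := Nat.mul_le_mul_left (Fintype.card G).minFac hle
  rw [← mul_assoc] at h3
  rw [mul_comm _ (Fintype.card G).minFac] at this
  omega

/-- If `P` is a cyclic normal subgroup of order coprime to its index, then
`ψ(G) ≤ ψ(P) ψ(G / P)`. -/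
theorem psi_le_psi_mul_psi_quotient {G : Type*} [Group G] [Fintype G] (P : Subgroup G) [P.Normal]
    [Fintype P] [Fintype (G ⧸ P)] [hc : IsCyclic P] (hco : (Nat.card P).Coprime P.index) :
    psi G ≤ psi P * psi (G ⧸ P) := by
  have hsec (c : G ⧸ P) : ∃ g : G, (g : G ⧸ P) = c ∧ g ^ orderOf c = 1 := by
    obtain ⟨g, rfl⟩ := QuotientGroup.mk_surjective c
    have hdvd : orderOf (g : G ⧸ P) ∣ P.index := orderOf_dvd_natCard _
    obtain ⟨k, hk0, hk1⟩ := Nat.chineseRemainder (hco.coprime_dvd_right hdvd) 0 1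
    refine ⟨g ^ k, ?_, ?_⟩
    · rw [QuotientGroup.mk_pow]
      conv_rhs => rw [← pow_one (g : G ⧸ P)]
      exact pow_eq_pow_iff_modEq.2 hk1
    · have hmem : g ^ orderOf (g : G ⧸ P) ∈ P := by
        rw [← QuotientGroup.eq_one_iff, QuotientGroup.mk_pow, pow_orderOf_eq_one]
      have horder : orderOf (g ^ orderOf (g : G ⧸ P)) ∣ k :=
        (Subgroup.orderOf_dvd_natCard P hmem).trans ((Nat.modEq_zero_iff_dvd).1 hk0)
      rw [← pow_mul, mul_comm, pow_mul]
      exact orderOf_dvd_iff_pow_eq_one.1 horder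
  choose s hs hs_pow using hsec
  have hnormal (u : P) : (Subgroup.zpowers (u : G)).Normal := by
    refine ⟨fun y hy g => ?_⟩
    obtain ⟨k, rfl⟩ := Subgroup.mem_zpowers_iff.1 hy
    obtain ⟨m, hm⟩ := MonoidHom.map_cyclic (MulAut.conjNormal g : MulAut P).toMonoidHom
    refine Subgroup.mem_zpowers_iff.2 ⟨k * m, ?_⟩
    simpa [zpow_mul] using (congrArg Subtype.val (hm (u ^ k))).symm
  have horder (c : G ⧸ P) (u : P) : orderOf (s c * u) ≤ orderOf u * orderOf c := by
    have := hnormal u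
    have hmem : (s c * u) ^ orderOf c ∈ Subgroup.zpowers (u : G) := by
      rw [← QuotientGroup.eq_one_iff, QuotientGroup.mk_pow, QuotientGroup.mk_mul,
        (QuotientGroup.eq_one_iff (u : G)).2 (Subgroup.mem_zpowers _), mul_one,
        ← QuotientGroup.mk_pow, hs_pow, QuotientGroup.mk_one]
    refine orderOf_le_of_pow_eq_one (Nat.mul_pos (orderOf_pos _) (orderOf_pos _)) ?_
    rw [mul_comm, pow_mul, ← orderOf_dvd_iff_pow_eq_one, ← Subgroup.orderOf_coe]
    exact orderOf_dvd_of_mem_zpowers hmem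
  have hmem (x : G) : (s x)⁻¹ * x ∈ P := QuotientGroup.eq.1 (hs x)
  let e : G → P × (G ⧸ P) := fun x => (⟨_, hmem x⟩, x)
  have he : Function.Injective e := fun x y hxy => by
    have h2 : (x : G ⧸ P) = y := congrArg Prod.snd hxy
    have h1 : (s x)⁻¹ * x = (s y)⁻¹ * y := congrArg (fun z => (z.1 : G)) hxy
    rw [h2] at h1
    exact mul_left_cancel h1
  calc psi G ≤ ∑ x : G, orderOf (e x).1 * orderOf (e x).2 := by
        refine Finset.sum_le_sum fun x _ => ?_
        have := horder x ⟨_, hmem x⟩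
        rwa [mul_inv_cancel_left] at this
    _ = ∑ z ∈ Finset.univ.map ⟨e, he⟩, orderOf z.1 * orderOf z.2 := by
        rw [Finset.sum_map]; rfl
    _ ≤ ∑ z : P × (G ⧸ P), orderOf z.1 * orderOf z.2 :=
        Finset.sum_le_sum_of_subset (Finset.subset_univ _)
    _ = psi P * psi (G ⧸ P) := by
        rw [Fintype.sum_prod_type, psi, psi, Finset.sum_mul_sum]

open Subgroup in
theorem isSolvable_of_index_prime_of_commute {p : ℕ} (hp : p.Prime) (N : ℕ) :
    ∀ (G : Type*) [Group G] [Finite G], Nat.card G = N → ∀ A : Subgroup G,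
      (∀ a ∈ A, ∀ b ∈ A, a * b = b * a) → A.index = p → Group.IsSolvable G := by
  induction N using Nat.strong_induction_on with
  | _ N ih =>
  intro G _ _ hN A hcomm hindex
  by_cases hcore : ∃ K : Subgroup G, K.Normal ∧ K ≤ A ∧ K ≠ ⊥
  · obtain ⟨K, hK, hKA, hne⟩ := hcore
    have hsurj := QuotientGroup.mk'_surjective K
    have hlt : Nat.card (G ⧸ K) < N := by
      rw [← hN, ← K.card_mul_index]
      have : 1 < Nat.card K := K.one_lt_card_iff_ne_bot.2 hne
      exact lt_mul_of_one_lt_left (Nat.pos_of_ne_zero K.index_ne_zero_of_finite) this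
    have hquot : Group.IsSolvable (G ⧸ K) := by
      refine ih _ hlt (G ⧸ K) rfl (A.map (QuotientGroup.mk' K)) ?_ ?_
      · rintro _ ⟨a, ha, rfl⟩ _ ⟨b, hb, rfl⟩
        rw [← map_mul, ← map_mul, hcomm a ha b hb]
      · rw [index_map_eq _ hsurj (by simpa using hKA), hindex]
    have hsub : Group.IsSolvable K := Group.isSolvable_of_comm fun a b =>
      Subtype.ext (hcomm a (hKA a.2) b (hKA b.2))
    exact Group.isSolvable_of_ker_le_range K.subtype (QuotientGroup.mk' K) (by simp)
  by_cases hr : ∃ r : ℕ, r.Prime ∧ r ∣ Nat.card A ∧ r ≠ p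
  · obtain ⟨r, hr, hrA, hrp⟩ := hr
    have := Fact.mk hr
    obtain ⟨R⟩ : Nonempty (Sylow r A) := inferInstance
    have hcardR : Nat.card ((R : Subgroup A).map A.subtype) =
        r ^ (Nat.card G).factorization r := by
      rw [card_map_of_injective A.subtype_injective, R.card_eq_multiplicity, ← A.card_mul_index,
        hindex, Nat.factorization_mul Nat.card_pos.ne' hp.ne_zero, Finsupp.add_apply,
        Nat.factorization_eq_zero_of_not_dvd (n := p)
          (fun h => hrp ((Nat.prime_dvd_prime_iff_eq hr hp).1 h)), add_zero]
    let Q : Sylow r G := Sylow.ofCard _ hcardR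
    have hQA : (Q : Subgroup G) ≤ A := map_subtype_le _
    have hQne : (Q : Subgroup G) ≠ ⊥ := by
      rw [← one_lt_card_iff_ne_bot, Q.card_eq_multiplicity]
      have hdvd : r ∣ Nat.card G := hrA.trans A.card_subgroup_dvd_card
      exact Nat.one_lt_pow (hr.factorization_pos_of_dvd Nat.card_pos.ne' hdvd).ne' hr.one_lt
    have hAC : A ≤ centralizer (Q : Set G) := fun a ha =>
      mem_centralizer_iff.2 fun b hb => hcomm b (hQA hb) a ha
    have hAN : A ≤ normalizer (Q : Set G) := hAC.trans (centralizer_le_normalizer _)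
    have hNC : normalizer (Q : Set G) ≤ centralizer (Q : Set G) := by
      have hdvd : (normalizer (Q : Set G)).index ∣ p := hindex ▸ index_dvd_of_le hAN
      rcases (Nat.dvd_prime hp).1 hdvd with h1 | h1
      · exact absurd ⟨Q, normalizer_eq_top_iff.1 (index_eq_one.1 h1), hQA, hQne⟩ hcore
      · have h2 := relIndex_mul_index hAN
        rw [h1, hindex] at h2
        have h3 : A.relIndex (normalizer (Q : Set G)) = 1 :=
          Nat.eq_of_mul_eq_mul_right hp.pos (h2.trans (one_mul p).symm)
        exact (relIndex_eq_one.1 h3).trans hAC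
    let f := MonoidHom.transferSylow Q hNC
    have hcompl : IsComplement' f.ker Q := MonoidHom.ker_transferSylow_isComplement' Q hNC
    have hsup : A ⊔ f.ker = ⊤ := by
      rw [sup_comm, eq_top_iff, ← hcompl.sup_eq_top]
      exact sup_le_sup_left hQA _
    have hrel : A.relIndex f.ker = p := by
      have h1 : f.ker.relIndex A = f.ker.index := by
        rw [← relIndex_sup_right A f.ker, hsup, relIndex_top_right]
      have h2 : A.relIndex f.ker * f.ker.index = f.ker.relIndex A * A.index := by
        rw [← inf_relIndex_right, relIndex_mul_index inf_le_right, ← inf_relIndex_right f.ker A,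
          relIndex_mul_index inf_le_right, inf_comm]
      rw [h1, hindex, mul_comm] at h2
      exact Nat.eq_of_mul_eq_mul_left (Nat.pos_of_ne_zero f.ker.index_ne_zero_of_finite) h2
    have hlt : Nat.card f.ker < N := by
      rw [← hN, ← hcompl.card_mul_card]
      exact lt_mul_of_one_lt_right Nat.card_pos ((one_lt_card_iff_ne_bot _).2 hQne)
    have hker : Group.IsSolvable f.ker :=
      ih _ hlt f.ker rfl (A.subgroupOf f.ker)
        (fun a ha b hb => Subtype.ext (hcomm a ha b hb)) hrel
    have hQ : Group.IsSolvable Q := Group.isSolvable_of_comm fun a b =>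
      Subtype.ext (hcomm a (hQA a.2) b (hQA b.2))
    exact Group.isSolvable_of_ker_le_range f.ker.subtype f (by simp)
  · push Not at hr
    have := Fact.mk hp
    have hA := Nat.eq_prime_pow_of_unique_prime_dvd Nat.card_pos.ne' @fun d hd hdA => hr d hd hdA
    have hG : IsPGroup p G := IsPGroup.of_card (n := (Nat.card A).primeFactorsList.length + 1) (by
      rw [← A.card_mul_index, hindex, pow_succ, ← hA])
    have := hG.isNilpotent
    infer_instance

theorem exists_orderOf_eq_of_dvd {G : Type*} [Group G] {x : G} {d : ℕ} (hx : orderOf x ≠ 0)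
    (hd : d ∣ orderOf x) : ∃ y ∈ Subgroup.zpowers x, orderOf y = d :=
  ⟨x ^ (orderOf x / d), Subgroup.npow_mem_zpowers _ _, orderOf_pow_orderOf_div hx hd⟩

open Subgroup in
/-- If a cyclic subgroup has index less than the prime `p`, then some Sylow `p`-subgroup is cyclic
and normal. -/
theorem exists_normal_isCyclic_sylow {G : Type*} [Group G] [Finite G] {p : ℕ} [hp : Fact p.Prime]
    {x : G} (hx : (zpowers x).index < p) :
    ∃ P : Sylow p G, (P : Subgroup G).Normal ∧ IsCyclic P := by
  have hpx : ¬ p ∣ (zpowers x).index := fun h =>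
    (Nat.le_of_dvd (Nat.pos_of_ne_zero index_ne_zero_of_finite) h).not_gt hx
  have hd : p ^ (Nat.card G).factorization p ∣ orderOf x := by
    rw [← Nat.card_zpowers]
    refine Nat.Coprime.dvd_of_dvd_mul_right
      (Nat.Coprime.pow_left _ ((hp.out.coprime_iff_not_dvd).2 hpx)) ?_
    rw [card_mul_index]
    exact Nat.ordProj_dvd _ _
  obtain ⟨y, hyx, hy⟩ := exists_orderOf_eq_of_dvd (orderOf_pos x).ne' hd
  let P : Sylow p G := Sylow.ofCard (zpowers y) (by rw [Nat.card_zpowers, hy])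
  have hxN : zpowers x ≤ normalizer (P : Set G) := by
    refine le_trans (fun a ha => mem_centralizer_iff.2 fun b hb => ?_)
      (centralizer_le_normalizer _)
    exact setLike_mul_comm (s := zpowers x) ((zpowers_le.2 hyx) hb) ha
  have hlt : Nat.card (Sylow p G) < p := by
    rw [P.card_eq_index_normalizer]
    exact (Nat.le_of_dvd (Nat.pos_of_ne_zero index_ne_zero_of_finite)
      (index_dvd_of_le hxN)).trans_lt hx
  have hone : Nat.card (Sylow p G) = 1 :=
    (card_sylow_modEq_one p G).eq_of_lt_of_lt hlt hp.out.one_lt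
  have := (Nat.card_eq_one_iff_unique.1 hone).1
  exact ⟨P, P.normal_of_subsingleton, inferInstanceAs (IsCyclic (zpowers y))⟩

theorem isSolvable_of_psiC_le (N : ℕ) : ∀ (G : Type*) [Group G] [Fintype G],
    Fintype.card G = N → psiC N ≤ N.minFac * psi G → Group.IsSolvable G := by
  induction N using Nat.strong_induction_on with
  | _ N ih =>
  intro G _ _ hN hpsi
  rcases (Nat.one_le_iff_ne_zero.2 (hN ▸ Fintype.card_ne_zero)).eq_or_lt with h1 | h1
  · have : Subsingleton G := Fintype.card_le_one_iff_subsingleton.1 (by omega)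
    infer_instance
  have hne : N.primeFactors.Nonempty := Nat.nonempty_primeFactors.2 h1
  let p := N.primeFactors.max' hne
  obtain ⟨hp, hpN, -⟩ := Nat.mem_primeFactors.1 (N.primeFactors.max'_mem hne)
  have := Fact.mk hp
  obtain ⟨x, hx⟩ := exists_index_zpowers_le (G := G) (p := p) (hN ▸ h1) (fun r hr hrN =>
    N.primeFactors.le_max' r (Nat.mem_primeFactors.2 ⟨hr, hN ▸ hrN, by omega⟩)) (hN ▸ hpsi)
  rcases hx.eq_or_lt with hx | hx
  · exact isSolvable_of_index_prime_of_commute hp _ G rfl _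
      (fun a ha b hb => setLike_mul_comm (s := Subgroup.zpowers x) ha hb) hx
  obtain ⟨P, hP, hcyc⟩ := exists_normal_isCyclic_sylow hx
  classical
  have hco : (Nat.card P).Coprime (P : Subgroup G).index := P.card_coprime_index
  have hmul := (P : Subgroup G).card_mul_index
  rw [Nat.card_eq_fintype_card (α := G), hN] at hmul
  have hind0 : (P : Subgroup G).index ≠ 0 := Subgroup.index_ne_zero_of_finite
  have hcard : Fintype.card (G ⧸ (P : Subgroup G)) = (P : Subgroup G).index :=
    (Nat.card_eq_fintype_card).symm
  have hpP : p ∣ Nat.card P := P.dvd_card_of_dvd_card (by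
    rwa [Nat.card_eq_fintype_card (α := G), hN])
  have hlt : (P : Subgroup G).index < N := by
    rw [← hmul]
    exact lt_mul_of_one_lt_left (Nat.pos_of_ne_zero hind0)
      (hp.one_lt.trans_le (Nat.le_of_dvd Nat.card_pos hpP))
  have hquot : Group.IsSolvable (G ⧸ (P : Subgroup G)) := by
    rcases (Nat.one_le_iff_ne_zero.2 hind0).eq_or_lt with h2 | h2
    · have : Subsingleton (G ⧸ (P : Subgroup G)) :=
        Fintype.card_le_one_iff_subsingleton.1 (by omega)
      infer_instance
    refine ih _ hlt _ hcard ?_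
    have hpos : 0 < psi P := by
      exact Finset.sum_pos (fun u _ => orderOf_pos u) Finset.univ_nonempty
    refine Nat.le_of_mul_le_mul_left ?_ hpos
    calc psi P * psiC (P : Subgroup G).index = psiC N := by
          rw [psi_eq_psiC, ← Nat.card_eq_fintype_card, ← hmul,
            psiC_mul_of_coprime Nat.card_pos.ne' hind0 hco]
      _ ≤ N.minFac * psi G := hpsi
      _ ≤ (P : Subgroup G).index.minFac * (psi P * psi (G ⧸ (P : Subgroup G))) := by
          gcongr
          · refine Nat.minFac_le_of_dvd (Nat.minFac_prime h2.ne').two_le ?_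
            exact (Nat.minFac_dvd _).trans (hmul ▸ Dvd.intro_left _ rfl)
          · exact psi_le_psi_mul_psi_quotient _ hco
      _ = _ := by ring
  have hPs : Group.IsSolvable P := by
    have := P.isPGroup'.isNilpotent
    infer_instance
  exact Group.isSolvable_of_ker_le_range (P : Subgroup G).subtype
    (QuotientGroup.mk' (P : Subgroup G)) (by simp)

open Subgroup in
open scoped Pointwise in
theorem exists_isCyclic_le_sylow_index_eq {G : Type*} [Group G] [Finite G] {p : ℕ}
    [hp : Fact p.Prime] (hpG : p ∣ Nat.card G) {x : G} (hx : (zpowers x).index ≤ p)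
    (P : Sylow p G) :
    ∃ H : Subgroup G, H ≤ P ∧ IsCyclic H ∧ (H.subgroupOf (P : Subgroup G)).index = p := by
  obtain ⟨a, ha⟩ : ∃ a, (Nat.card G).factorization p = a + 1 :=
    Nat.exists_eq_succ_of_ne_zero (hp.out.factorization_pos_of_dvd Nat.card_pos.ne' hpG).ne'
  have hd : p ^ a ∣ orderOf x := by
    have hdvd : p ^ (a + 1) ∣ orderOf x * (zpowers x).index := by
      rw [← Nat.card_zpowers, card_mul_index, ← ha]
      exact Nat.ordProj_dvd _ _
    rcases hx.eq_or_lt with hx | hx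
    · rw [hx, pow_succ] at hdvd
      exact Nat.dvd_of_mul_dvd_mul_right hp.out.pos hdvd
    · have hpx : ¬ p ∣ (zpowers x).index := fun h =>
        (Nat.le_of_dvd (Nat.pos_of_ne_zero index_ne_zero_of_finite) h).not_gt hx
      exact (pow_dvd_pow p a.le_succ).trans (Nat.Coprime.dvd_of_dvd_mul_right
        (Nat.Coprime.pow_left _ ((hp.out.coprime_iff_not_dvd).2 hpx)) hdvd)
  obtain ⟨y, -, hy⟩ := exists_orderOf_eq_of_dvd (orderOf_pos x).ne' hd
  obtain ⟨Q, hQ⟩ := (IsPGroup.of_card (p := p) (n := a)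
    (by rw [Nat.card_zpowers, hy])).exists_le_sylow (P := zpowers y)
  obtain ⟨g, rfl⟩ := MulAction.exists_smul_eq G Q P
  have hle : zpowers (g * y * g⁻¹) ≤ (g • Q : Sylow p G) := by
    rw [zpowers_le]
    exact smul_mem_pointwise_smul y (MulAut.conj g) (Q : Subgroup G) (hQ (mem_zpowers y))
  refine ⟨zpowers (g * y * g⁻¹), hle, inferInstance, ?_⟩
  have hmul := relIndex_mul_relIndex ⊥ _ _ bot_le hle
  rw [relIndex_bot_left, relIndex_bot_left, Nat.card_zpowers, ← MulAut.conj_apply,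
    MulEquiv.orderOf_eq, hy, Sylow.card_eq_multiplicity, ha, pow_succ] at hmul
  exact Nat.eq_of_mul_eq_mul_left (pow_pos hp.out.pos a) hmul

theorem solvable_of_minFac_mul_psi_ge {G : Type*} [Group G] [Fintype G] (n p : ℕ)
    (hn : Fintype.card G = n) (h1 : 1 < n)
    (hp : p.Prime) (hpd : p ∣ n) (hpmax : ∀ r : ℕ, r.Prime → r ∣ n → r ≤ p)
    (hpsi : psiC n ≤ n.minFac * psi G) :
    IsSolvable G ∧
    ∀ P : Sylow p G, ∃ H : Subgroup G, H ≤ (P : Subgroup G) ∧ IsCyclic H ∧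
      (H.subgroupOf (P : Subgroup G)).index = p := by
  have := Fact.mk hp
  obtain ⟨x, hx⟩ := exists_index_zpowers_le (G := G) (p := p) (hn ▸ h1)
    (fun r hr hrn => hpmax r hr (hn ▸ hrn)) (hn ▸ hpsi)
  exact ⟨isSolvable_of_psiC_le n G hn hpsi,
    exists_isCyclic_le_sylow_index_eq (by rwa [Nat.card_eq_fintype_card, hn]) hx⟩
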